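/- Let T be a finite rooted forest, let v be a vertex of T, and let m be a positive integer with m ≤ |D(v)|. Then there exists a set S of exactly m descendants of v that is closed under taking descendants, i.e., for every w ∈ S, D(w) ⊆ S. Consequently, every w ∈ S satisfies |D(w)| ≤ m − 1. -/

import Mathlib

/-- Iterated parent map of a rooted forest: `parIter par n v` is the vertex reached from
`v` by `n` applications of the parent map `par` (or `none` if a root is passed). -/
def parIter {V : Type*} (par : V → Option V) : ℕ → V → Option V
  | 0, v => some v
  | n + 1, v => (parIter par n v).bind par

/-- A parent map defines a rooted forest if iterating it from any vertex eventually
reaches a root. -/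
def IsRootedForest {V : Type*} (par : V → Option V) : Prop :=
  ∀ v : V, ∃ n : ℕ, parIter par n v = none

/-- `u` is an ancestor of `v`. -/
def IsAnc {V : Type*} (par : V → Option V) (u v : V) : Prop :=
  ∃ n : ℕ, 0 < n ∧ parIter par n v = some u

/-- The set `D(v)` of descendants of `v`. -/
def Desc {V : Type*} (par : V → Option V) (v : V) : Set V :=
  {w | IsAnc par v w}

theorem parIter_add' {V : Type*} (par : V → Option V) (a b : ℕ) (v : V) :
    parIter par (a + b) v = (parIter par a v).bind (parIter par b) := by
  induction b with
  | zero =>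
    cases h : parIter par a v <;> simp [parIter, h]
  | succ b ih =>
    rw [← Nat.add_assoc]
    show (parIter par (a + b) v).bind par = _
    rw [ih, Option.bind_assoc]
    rfl

theorem isAnc_trans' {V : Type*} {par : V → Option V} {a b c : V}
    (h1 : IsAnc par a b) (h2 : IsAnc par b c) : IsAnc par a c := by
  obtain ⟨n, hn, h1⟩ := h1
  obtain ⟨k, hk, h2⟩ := h2
  refine ⟨k + n, by omega, ?_⟩
  rw [parIter_add', h2]
  exact h1

theorem isAnc_irrefl' {V : Type*} {par : V → Option V} (hf : IsRootedForest par) (a : V) :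
    ¬ IsAnc par a a := by
  rintro ⟨n, hn, h⟩
  obtain ⟨N, hN⟩ := hf a
  have key : ∀ k, parIter par (n * k) a = some a := by
    intro k
    induction k with
    | zero => rfl
    | succ k ih =>
      rw [Nat.mul_succ, parIter_add', ih]
      exact h
  have h1 := key N
  have hle : N ≤ n * N := Nat.le_mul_of_pos_left N hn
  obtain ⟨d, hd⟩ := Nat.exists_eq_add_of_le hle
  rw [hd, parIter_add', hN] at h1
  simp at h1

/-- **From the proof of Lemma 5 of the paper.**  Let `T` be a finite rooted forest, `v` a
vertex, and `m` a positive integer with `m ≤ |D(v)|`.  Then there is a set `S` of exactly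
`m` descendants of `v` that is closed under taking descendants; consequently every
`w ∈ S` satisfies `|D(w)| ≤ m - 1`. -/
theorem exists_descendant_closed_subset (V : Type*) [Fintype V]
    (par : V → Option V) (hforest : IsRootedForest par)
    (v : V) (m : ℕ) (hm : 0 < m) (hmD : m ≤ (Desc par v).ncard) :
    ∃ S : Set V, S ⊆ Desc par v ∧ S.ncard = m ∧
      (∀ w ∈ S, Desc par w ⊆ S) ∧ ∀ w ∈ S, (Desc par w).ncard ≤ m - 1 := by
  have hirr := isAnc_irrefl' hforest
  have key : ∀ k, k ≤ (Desc par v).ncard → ∃ S : Set V, S ⊆ Desc par v ∧ S.ncard = k ∧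
      (∀ w ∈ S, Desc par w ⊆ S) := by
    intro k
    induction k with
    | zero => intro _; exact ⟨∅, by simp, by simp, by simp⟩
    | succ k ih =>
      intro hk
      obtain ⟨S, hS, hc, hcl⟩ := ih (by omega)
      have hne : (Desc par v \ S).Nonempty :=
        Set.diff_nonempty_of_ncard_lt_ncard (by omega) (Set.toFinite _)
      obtain ⟨w, hw, hmin⟩ := Set.exists_min_image (Desc par v \ S)
        (fun u => (Desc par u).ncard) (Set.toFinite _) hne
      have hwS : Desc par w ⊆ S := by
        intro u hu
        by_contra huS
        have h1 := hmin u ⟨isAnc_trans' hw.1 hu, huS⟩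
        have h2 : (Desc par u).ncard < (Desc par w).ncard := by
          apply Set.ncard_lt_ncard _ (Set.toFinite _)
          refine ⟨fun x hx => isAnc_trans' hu hx, fun h => hirr u (h hu)⟩
        omega
      refine ⟨insert w S, Set.insert_subset hw.1 hS, ?_, ?_⟩
      · rw [Set.ncard_insert_of_notMem hw.2 (Set.toFinite _), hc]
      · intro x hx
        rcases hx with rfl | hx
        · exact hwS.trans (Set.subset_insert _ _)
        · exact (hcl x hx).trans (Set.subset_insert _ _)
  obtain ⟨S, hS, hc, hcl⟩ := key m hmD
  refine ⟨S, hS, hc, hcl, fun w hw => ?_⟩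
  have : (Desc par w).ncard < S.ncard := by
    apply Set.ncard_lt_ncard _ (Set.toFinite _)
    exact ⟨hcl w hw, fun h => hirr w (h hw)⟩
  omega
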